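/- For every integer n ≥ 3, the total domination number of the flower snark J_n equals ⌈3n/2⌉ if n is not congruent to 2 mod 4, and equals 3n/2 + 1 if n is congruent to 2 mod 4. -/

import Mathlib

/-- Vertices of the flower snark `J_n`: a copy index `i : Fin n` together with
one of the four vertices of the copy: `0 = a`, `1 = b`, `2 = c`, `3 = d`. -/
abbrev FV (n : ℕ) := Fin n × Fin 4

/-- The flower snark `J_n`: in each copy, `a^i` is adjacent to `b^i, c^i, d^i`;
the `b` vertices form an `n`-cycle; the `c` and `d` vertices form a `2n`-cycle
via the paths `c^i c^{i+1}`, `d^i d^{i+1}` (for `1 ≤ i ≤ n-1`) together with the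
twist edges `c^n d^1` and `d^n c^1`. -/
def flowerSnark (n : ℕ) : SimpleGraph (FV n) :=
  SimpleGraph.fromRel (fun v w =>
    (v.1 = w.1 ∧ v.2 = 0 ∧ w.2 ≠ 0) ∨
    (((v.1 : ℕ) + 1) % n = (w.1 : ℕ) ∧ v.2 = 1 ∧ w.2 = 1) ∨
    ((v.1 : ℕ) + 1 = (w.1 : ℕ) ∧ v.2 = 2 ∧ w.2 = 2) ∨
    ((v.1 : ℕ) + 1 = (w.1 : ℕ) ∧ v.2 = 3 ∧ w.2 = 3) ∨
    ((v.1 : ℕ) = n - 1 ∧ (w.1 : ℕ) = 0 ∧ v.2 = 2 ∧ w.2 = 3) ∨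
    ((v.1 : ℕ) = n - 1 ∧ (w.1 : ℕ) = 0 ∧ v.2 = 3 ∧ w.2 = 2))

/-- `S` is a dominating set of `J_n`. -/
def Dominating (n : ℕ) (S : Set (FV n)) : Prop :=
  ∀ v ∉ S, ∃ w ∈ S, (flowerSnark n).Adj v w

/-- `S` is a minimal dominating set of `J_n`. -/
def MinimalDominating (n : ℕ) (S : Set (FV n)) : Prop :=
  Dominating n S ∧ ∀ T : Set (FV n), T ⊂ S → ¬ Dominating n T

/-- `S` is an independent set of `J_n`. -/
def IndependentSet (n : ℕ) (S : Set (FV n)) : Prop :=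
  ∀ v ∈ S, ∀ w ∈ S, ¬ (flowerSnark n).Adj v w

/-- `S` is a 2-dominating set of `J_n`: every vertex outside `S` has at least
two neighbours in `S`. -/
def TwoDominating (n : ℕ) (S : Set (FV n)) : Prop :=
  ∀ v ∉ S, ∃ w₁ ∈ S, ∃ w₂ ∈ S, w₁ ≠ w₂ ∧
    (flowerSnark n).Adj v w₁ ∧ (flowerSnark n).Adj v w₂

/-- `S` is a total dominating set of `J_n`. -/
def TotalDominating (n : ℕ) (S : Set (FV n)) : Prop :=
  ∀ v : FV n, ∃ w ∈ S, (flowerSnark n).Adj v w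

/-- `S` is a connected dominating set of `J_n`. -/
def ConnectedDominating (n : ℕ) (S : Set (FV n)) : Prop :=
  Dominating n S ∧ ((flowerSnark n).induce S).Connected

/-- `S` is a secure dominating set of `J_n`. -/
def SecureDominating (n : ℕ) (S : Set (FV n)) : Prop :=
  Dominating n S ∧ ∀ v ∉ S, ∃ w ∈ S,
    (flowerSnark n).Adj v w ∧ Dominating n (insert v (S \ {w}))

/-- `v` is undefended with respect to `f`: neither `v` nor any of its
neighbours carries a guard. -/
def Undefended (n : ℕ) (f : FV n → ℕ) (v : FV n) : Prop :=
  f v = 0 ∧ ∀ w, (flowerSnark n).Adj v w → f w = 0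

/-- `f` is a weak Roman dominating function on `J_n`: `f` takes values in
`{0,1,2}`, has no undefended vertex, and every vertex `v` with `f v = 0` has a
neighbour `w` with `f w ≥ 1` such that moving one guard from `w` to `v` leaves
no undefended vertex. -/
def WeakRomanDominating (n : ℕ) (f : FV n → ℕ) : Prop :=
  (∀ v, f v ≤ 2) ∧ (∀ v, ¬ Undefended n f v) ∧
  ∀ v, f v = 0 → ∃ w, (flowerSnark n).Adj v w ∧ 1 ≤ f w ∧
    ∀ u, ¬ Undefended n
      (fun x => if x = v then 1 else if x = w then f w - 1 else f x) u

/-- The domination number of `J_n`. -/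
noncomputable def dominationNumber (n : ℕ) : ℕ :=
  sInf {k | ∃ S : Set (FV n), Dominating n S ∧ S.ncard = k}

/-- The independent domination number of `J_n`. -/
noncomputable def indepDominationNumber (n : ℕ) : ℕ :=
  sInf {k | ∃ S : Set (FV n), Dominating n S ∧ IndependentSet n S ∧ S.ncard = k}

/-- The upper domination number of `J_n`: the maximum cardinality of a minimal
dominating set. -/
noncomputable def upperDominationNumber (n : ℕ) : ℕ :=
  sSup {k | ∃ S : Set (FV n), MinimalDominating n S ∧ S.ncard = k}

/-- The 2-domination number of `J_n`. -/
noncomputable def twoDominationNumber (n : ℕ) : ℕ :=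
  sInf {k | ∃ S : Set (FV n), TwoDominating n S ∧ S.ncard = k}

/-- The total domination number of `J_n`. -/
noncomputable def totalDominationNumber (n : ℕ) : ℕ :=
  sInf {k | ∃ S : Set (FV n), TotalDominating n S ∧ S.ncard = k}

/-- The connected domination number of `J_n`. -/
noncomputable def connectedDominationNumber (n : ℕ) : ℕ :=
  sInf {k | ∃ S : Set (FV n), ConnectedDominating n S ∧ S.ncard = k}

/-- The secure domination number of `J_n`. -/
noncomputable def secureDominationNumber (n : ℕ) : ℕ :=
  sInf {k | ∃ S : Set (FV n), SecureDominating n S ∧ S.ncard = k}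

/-- The weak Roman domination number of `J_n`. -/
noncomputable def weakRomanDominationNumber (n : ℕ) : ℕ :=
  sInf {k | ∃ f : FV n → ℕ, WeakRomanDominating n f ∧ ∑ v, f v = k}

/-- The weight of the copy `J^(m mod n)` in a vertex set `S`, i.e. the number
of vertices of `S` among `a, b, c, d` of that copy. -/
noncomputable def copyWeight {n : ℕ} (S : Set (FV n)) (m : ℕ) : ℕ :=
  (S ∩ {v : FV n | (v.1 : ℕ) = m % n}).ncard

/-- The weight of the copy `J^(m mod n)` in a function `f`, i.e.
`f a + f b + f c + f d` over that copy. -/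
def fCopyWeight {n : ℕ} (f : FV n → ℕ) (m : ℕ) : ℕ :=
  ∑ v ∈ Finset.univ.filter (fun v : FV n => (v.1 : ℕ) = m % n), f v

/-! Let every copy `i` receive the charge `2 [aⁱ ∈ S] + xᵢ₋₁ + xᵢ₊₁`, where `xⱼ` counts the
vertices of `S` among `bʲ, cʲ, dʲ`; the charges add up to `2 |S|`. Let `S` be totally dominating.
If `aⁱ ∉ S`, then `xᵢ₋₁ + xᵢ₊₁ ≥ 3`, because `bⁱ, cⁱ, dⁱ` are dominated and every outer vertex of
the copies `i - 1` and `i + 1` dominates exactly one of them; if `aⁱ ∈ S`, then `xᵢ₋₁, xᵢ₊₁ ≥ 1`,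
because `aⁱ⁻¹` and `aⁱ⁺¹` are dominated. Hence `2 |S| ≥ 3n`, with equality only if
`xᵢ₋₁ + xᵢ₊₁ = 3` for all `i`; then `2x - 3` changes sign under a shift by two copies, which is
impossible if `n / 2` is an odd integer.

For the upper bound, choose the outer vertices `c, d` in some copies and `b` in the others,
following the pattern `b, cd, cd, b` of period four, and add `aⁱ` wherever the copies `i - 1` and
`i + 1` are of the same kind. These are then both of kind `b` and copy `i` is charged 4, whereas all
other copies are charged 3. Only where the period is cut off are there such copies `i`: two if
`n ≡ 2 (mod 4)`, one if `n` is odd, and none if `4 ∣ n`. -/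

open Finset

namespace flowerSnark

lemma one_le_indicator {α : Type*} {S : Set α} {v : α} (hv : v ∈ S) :
    1 ≤ S.indicator (1 : α → ℕ) v := by
  simp [hv]

lemma even_of_add_shift_eq {G : Type*} [AddMonoid G] {f : G → ℤ} {c : ℤ} {d : G} {m : ℕ}
    (hf : ∀ x, f x + f (x + d) = c) (hm : Odd m) (hd : m • d = 0) : Even c := by
  have hanti : Function.Antiperiodic (fun x => 2 * f x - c) d := by
    intro x
    dsimp only
    linarith [hf x]
  obtain ⟨k, rfl⟩ := hm
  have hsign := hanti.odd_nsmul_antiperiodic k 0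
  simp only [hd, add_zero] at hsign
  exact ⟨f 0, by linarith⟩

variable {n : ℕ}

section FinArithmetic

variable [NeZero n]

lemma val_add_one_eq_ite (i : Fin n) :
    ((i + 1 : Fin n) : ℕ) = if (i : ℕ) + 1 = n then 0 else (i : ℕ) + 1 := by
  obtain ⟨m, rfl⟩ := Nat.exists_eq_succ_of_ne_zero (NeZero.ne n)
  simp [Fin.val_add_one, Fin.ext_iff]

lemma val_sub_one_eq_ite (i : Fin n) :
    ((i - 1 : Fin n) : ℕ) = if (i : ℕ) = 0 then n - 1 else (i : ℕ) - 1 := by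
  obtain ⟨m, rfl⟩ := Nat.exists_eq_succ_of_ne_zero (NeZero.ne n)
  rw [Fin.coe_sub_one]
  simp only [Fin.ext_iff, Fin.val_zero, Nat.succ_eq_add_one, Nat.add_sub_cancel]

lemma add_one_mod_eq_val_iff (i j : Fin n) : ((i : ℕ) + 1) % n = j ↔ j = i + 1 := by
  simp [Fin.ext_iff, Fin.val_add, eq_comm]

lemma add_one_eq_val_iff (i j : Fin n) : (i : ℕ) + 1 = j ↔ j ≠ 0 ∧ j = i + 1 := by
  have := val_add_one_eq_ite i
  rw [Ne, Fin.ext_iff, Fin.ext_iff, Fin.val_zero]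
  split_ifs at this <;> omega

lemma val_eq_sub_one_and_val_eq_zero_iff (i j : Fin n) :
    (i : ℕ) = n - 1 ∧ (j : ℕ) = 0 ↔ j = 0 ∧ j = i + 1 := by
  have := val_add_one_eq_ite i
  rw [Fin.ext_iff, Fin.ext_iff, Fin.val_zero]
  split_ifs at this <;> omega

end FinArithmetic

lemma adj_hub_iff (i : Fin n) (w : FV n) :
    (flowerSnark n).Adj (i, 0) w ↔ ∃ t : Fin 3, w = (i, t.succ) := by
  obtain ⟨j, u⟩ := w
  cases u using Fin.cases <;> simp [flowerSnark, Prod.ext_iff, eq_comm]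

/-- The number of vertices of `S` among the outer vertices `b, c, d` of copy `i`. -/
noncomputable def outerWeight (S : Set (FV n)) (i : Fin n) : ℕ :=
  ∑ t : Fin 3, S.indicator 1 (i, t.succ)

lemma ncard_eq_sum (S : Set (FV n)) :
    S.ncard = ∑ i, (S.indicator 1 (i, 0) + outerWeight S i) := by
  classical
  calc S.ncard = ∑ v, S.indicator 1 v := by
        rw [Set.ncard_eq_toFinset_card', ← Set.filter_mem_univ_eq_toFinset, card_filter]
        simp only [Set.indicator_apply, Pi.one_apply]
    _ = _ := by simp [Fintype.sum_prod_type, Fin.sum_univ_succ, outerWeight]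

lemma one_le_outerWeight {S : Set (FV n)} (hS : TotalDominating n S) (i : Fin n) :
    1 ≤ outerWeight S i := by
  obtain ⟨w, hw, hadj⟩ := hS (i, 0)
  obtain ⟨t, rfl⟩ := (adj_hub_iff i w).1 hadj
  calc 1 ≤ S.indicator (1 : FV n → ℕ) (i, t.succ) := one_le_indicator hw
    _ ≤ outerWeight S i := single_le_sum (f := fun t : Fin 3 => S.indicator 1 (i, t.succ))
        (fun _ _ => Nat.zero_le _) (mem_univ t)

variable [NeZero n]

/-- How the outer paths pass from copy `j - 1` into copy `j`: the outer vertices `b, c, d` of copy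
`i` are written `(i, t.succ)` with `t = 0, 1, 2 : Fin 3`, and entering copy `0` exchanges `c` and
`d`. -/
def twist (j : Fin n) : Equiv.Perm (Fin 3) :=
  if j = 0 then Equiv.swap 1 2 else 1

lemma twist_twist (j : Fin n) (t : Fin 3) : twist j (twist j t) = t := by
  unfold twist
  split_ifs <;> simp

lemma twist_eq_zero_iff (j : Fin n) (t : Fin 3) : twist j t = 0 ↔ t = 0 := by
  unfold twist
  split_ifs
  · revert t; decide
  · rfl

/-- The condition `(i, t) ≠ (j, u)` excludes the loops that arise for `n = 1`. -/
lemma adj_outer_iff (i j : Fin n) (t u : Fin 3) :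
    (flowerSnark n).Adj (i, t.succ) (j, u.succ) ↔
      (i, t) ≠ (j, u) ∧ (j = i + 1 ∧ u = twist j t ∨ i = j + 1 ∧ t = twist i u) := by
  have hforward (k l : Fin n) (p q : Fin 3) :
      (((k : ℕ) + 1) % n = l ∧ p.succ = 1 ∧ q.succ = 1 ∨
        (k : ℕ) + 1 = l ∧ p.succ = 2 ∧ q.succ = 2 ∨
        (k : ℕ) + 1 = l ∧ p.succ = 3 ∧ q.succ = 3 ∨
        (k : ℕ) = n - 1 ∧ (l : ℕ) = 0 ∧ p.succ = 2 ∧ q.succ = 3 ∨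
        (k : ℕ) = n - 1 ∧ (l : ℕ) = 0 ∧ p.succ = 3 ∧ q.succ = 2) ↔
      l = k + 1 ∧ q = twist l p := by
    have hswap : Equiv.swap (1 : Fin 3) 2 0 = 0 := by decide
    simp only [← and_assoc, add_one_mod_eq_val_iff, add_one_eq_val_iff,
      val_eq_sub_one_and_val_eq_zero_iff, twist]
    by_cases hl : l = 0 <;> fin_cases p <;> fin_cases q <;> simp [hl, hswap]
  simp only [flowerSnark, SimpleGraph.fromRel_adj, Fin.succ_ne_zero, false_and, and_false, false_or,
    hforward, ne_eq, Prod.mk.injEq, Fin.succ_inj]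

lemma eq_of_adj_outer {i : Fin n} {t : Fin 3} {w : FV n} (h : (flowerSnark n).Adj (i, t.succ) w) :
    w = (i, 0) ∨ w = (i - 1, (twist i t).succ) ∨ w = (i + 1, (twist (i + 1) t).succ) := by
  obtain ⟨j, u⟩ := w
  cases u using Fin.cases with
  | zero =>
    obtain ⟨s, hs⟩ := (adj_hub_iff j _).1 h.symm
    obtain rfl := (Prod.ext_iff.1 hs).1
    exact .inl rfl
  | succ u =>
    obtain ⟨-, ⟨rfl, rfl⟩ | ⟨rfl, rfl⟩⟩ := (adj_outer_iff i j t u).1 h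
    · exact .inr (.inr rfl)
    · exact .inr (.inl (by rw [twist_twist, add_sub_cancel_right]))

lemma adj_add_one {i : Fin n} (hi : i + 1 ≠ i) (t : Fin 3) :
    (flowerSnark n).Adj (i, t.succ) (i + 1, (twist (i + 1) t).succ) :=
  (adj_outer_iff ..).2 ⟨fun h => hi (Prod.ext_iff.1 h).1.symm, .inl ⟨rfl, rfl⟩⟩

lemma adj_sub_one {i : Fin n} (hi : i - 1 ≠ i) (t : Fin 3) :
    (flowerSnark n).Adj (i, t.succ) (i - 1, (twist i t).succ) :=
  (adj_outer_iff ..).2 ⟨fun h => hi (Prod.ext_iff.1 h).1.symm,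
    .inr ⟨(sub_add_cancel i 1).symm, (twist_twist i t).symm⟩⟩

/-- The charge of copy `i`: the outer vertices of `S` count once for each of the two neighbouring
copies, and `aⁱ` counts twice. -/
noncomputable def charge (S : Set (FV n)) (i : Fin n) : ℕ :=
  2 * S.indicator 1 (i, 0) + outerWeight S (i - 1) + outerWeight S (i + 1)

lemma sum_charge (S : Set (FV n)) : ∑ i, charge S i = 2 * S.ncard := by
  have hsub : ∑ i, outerWeight S (i - 1) = ∑ i, outerWeight S i :=
    Equiv.sum_comp (Equiv.subRight 1) _
  have hadd : ∑ i, outerWeight S (i + 1) = ∑ i, outerWeight S i :=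
    Equiv.sum_comp (Equiv.addRight 1) _
  simp only [charge, ncard_eq_sum, sum_add_distrib, hsub, hadd, ← mul_sum]
  ring

section LowerBound

variable {S : Set (FV n)}

lemma one_le_indicator_add (hS : TotalDominating n S) (i : Fin n) (t : Fin 3) :
    1 ≤ S.indicator 1 (i, 0) + S.indicator 1 (i - 1, (twist i t).succ) +
      S.indicator (1 : FV n → ℕ) (i + 1, (twist (i + 1) t).succ) := by
  obtain ⟨w, hw, hadj⟩ := hS (i, t.succ)
  have := one_le_indicator hw
  rcases eq_of_adj_outer hadj with rfl | rfl | rfl <;> omega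

lemma sum_indicator_twist (i j : Fin n) :
    ∑ t, S.indicator 1 (i, (twist j t).succ) = outerWeight S i :=
  Equiv.sum_comp (twist j) fun t => S.indicator 1 (i, t.succ)

lemma three_le_indicator_add_outerWeight (hS : TotalDominating n S) (i : Fin n) :
    3 ≤ S.indicator 1 (i, 0) + outerWeight S (i - 1) + outerWeight S (i + 1) := by
  have hsum : 3 ≤ 3 * S.indicator 1 (i, 0) + outerWeight S (i - 1) + outerWeight S (i + 1) := by
    simpa [sum_add_distrib, sum_indicator_twist] using
      sum_le_sum fun t (_ : t ∈ univ) => one_le_indicator_add hS i t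
  have hprev := one_le_outerWeight hS (i - 1)
  have hnext := one_le_outerWeight hS (i + 1)
  omega

lemma three_le_charge (hS : TotalDominating n S) (i : Fin n) : 3 ≤ charge S i := by
  have := three_le_indicator_add_outerWeight hS i
  unfold charge
  omega

lemma three_mul_le_two_mul_ncard (hS : TotalDominating n S) : 3 * n ≤ 2 * S.ncard :=
  calc 3 * n = ∑ _i : Fin n, 3 := by simp [mul_comm]
    _ ≤ ∑ i, charge S i := sum_le_sum fun i _ => three_le_charge hS i
    _ = 2 * S.ncard := sum_charge S

lemma outerWeight_add_eq_three (hS : TotalDominating n S) (h : 2 * S.ncard = 3 * n) (i : Fin n) :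
    outerWeight S (i - 1) + outerWeight S (i + 1) = 3 := by
  have hcharge : 3 = charge S i := by
    refine (sum_eq_sum_iff_of_le fun i _ => three_le_charge hS i).1 ?_ i (mem_univ i)
    simp [sum_charge, h, mul_comm]
  have := three_le_indicator_add_outerWeight hS i
  unfold charge at hcharge
  omega

lemma three_mul_lt_two_mul_ncard (hS : TotalDominating n S) (hn : n % 4 = 2) :
    3 * n < 2 * S.ncard := by
  refine (three_mul_le_two_mul_ncard hS).lt_of_ne' fun h => ?_
  have hshift (i : Fin n) : (outerWeight S i : ℤ) + outerWeight S (i + 2 • 1) = 3 := by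
    have := outerWeight_add_eq_three hS h (i + 1)
    rw [add_sub_cancel_right, add_assoc, ← two_nsmul] at this
    exact_mod_cast this
  have hodd : Odd (n / 2) := Nat.odd_iff.2 (by omega)
  have hzero : (n / 2) • 2 • (1 : Fin n) = 0 := by
    rw [smul_smul, show n / 2 * 2 = n by omega]
    simpa using card_nsmul_eq_zero (x := (1 : Fin n))
  exact absurd (even_of_add_shift_eq hshift hodd hzero) (by decide)

end LowerBound

section UpperBound

variable (C : Finset (Fin n))

/-- The copies whose two neighbouring copies both belong to `C` or both do not. -/
def monochromatic : Finset (Fin n) := {i | i - 1 ∈ C ↔ i + 1 ∈ C}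

/-- The set containing `c` and `d` of the copies in `C`, `b` of the remaining copies, and `a` of the
copies between two copies of the same kind. -/
def patternSet : Set (FV n) :=
  {v | if v.2 = 0 then v.1 ∈ monochromatic C else (v.2 = 1 ↔ v.1 ∉ C)}

lemma hub_mem_patternSet {i : Fin n} :
    (i, 0) ∈ patternSet C ↔ i ∈ monochromatic C := by
  simp [patternSet]

lemma outer_mem_patternSet {i : Fin n} {t : Fin 3} :
    (i, t.succ) ∈ patternSet C ↔ (t = 0 ↔ i ∉ C) := by
  have : t.succ = 1 ↔ t = 0 := Fin.succ_inj (b := 0)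
  simp [patternSet, this]

lemma totalDominating_patternSet : TotalDominating n (patternSet C) := by
  rintro ⟨i, u⟩
  cases u using Fin.cases with
  | zero =>
    by_cases hi : i ∈ C
    · exact ⟨(i, (1 : Fin 3).succ), (outer_mem_patternSet C).2 (by simp [hi]),
        (adj_hub_iff i _).2 ⟨1, rfl⟩⟩
    · exact ⟨(i, (0 : Fin 3).succ), (outer_mem_patternSet C).2 (by simp [hi]),
        (adj_hub_iff i _).2 ⟨0, rfl⟩⟩
  | succ t =>
    by_cases hmono : i ∈ monochromatic C
    · exact ⟨(i, 0), (hub_mem_patternSet C).2 hmono, ((adj_hub_iff i _).2 ⟨t, rfl⟩).symm⟩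
    have hne : ¬(i - 1 ∈ C ↔ i + 1 ∈ C) := by simpa [monochromatic] using hmono
    have hadd : i + 1 ≠ i := by
      intro h
      exact hne (by rw [sub_eq_of_eq_add h.symm, h])
    have hsub : i - 1 ≠ i := fun h => hadd (sub_eq_iff_eq_add.1 h).symm
    by_cases hprev : t = 0 ↔ i - 1 ∉ C
    · exact ⟨(i - 1, (twist i t).succ),
        (outer_mem_patternSet C).2 ((twist_eq_zero_iff i t).trans hprev), adj_sub_one hsub t⟩
    · have hnext : t = 0 ↔ i + 1 ∉ C := by tauto
      exact ⟨(i + 1, (twist (i + 1) t).succ),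
        (outer_mem_patternSet C).2 ((twist_eq_zero_iff _ t).trans hnext), adj_add_one hadd t⟩

lemma outerWeight_patternSet (i : Fin n) :
    outerWeight (patternSet C) i = if i ∈ C then 2 else 1 := by
  classical
  by_cases hi : i ∈ C <;>
    simp [outerWeight, Set.indicator_apply, outer_mem_patternSet, Fin.sum_univ_three, hi]

variable {C} in
lemma two_mul_ncard_patternSet (hC : ∀ i, ¬(i - 1 ∈ C ∧ i + 1 ∈ C)) :
    2 * (patternSet C).ncard = 3 * n + #(monochromatic C) := by
  classical
  have hcharge : ∀ i, charge (patternSet C) i = 3 + if i ∈ monochromatic C then 1 else 0 := by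
    intro i
    have := hC i
    by_cases hprev : i - 1 ∈ C <;> by_cases hnext : i + 1 ∈ C <;>
      simp_all [charge, outerWeight_patternSet, hub_mem_patternSet, monochromatic]
  simp [← sum_charge, hcharge, sum_add_distrib, mul_comm]

variable (n) in
/-- The copies containing `c` and `d` in the extremal pattern: `b, cd, cd, b` of period four, with
the last copy forced to be of kind `b`. -/
def cdCopies : Finset (Fin n) := {i | ((i : ℕ) % 4 = 1 ∨ (i : ℕ) % 4 = 2) ∧ (i : ℕ) + 1 ≠ n}

lemma not_sub_one_mem_and_add_one_mem_cdCopies (i : Fin n) :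
    ¬(i - 1 ∈ cdCopies n ∧ i + 1 ∈ cdCopies n) := by
  have := i.2
  have hprev := val_sub_one_eq_ite i
  have hnext := val_add_one_eq_ite i
  simp only [cdCopies, mem_filter, mem_univ, true_and]
  split_ifs at hprev hnext <;> omega

/-- According as `n % 4` is `0, 1, 2, 3`, the interval is `∅`, `{n - 1}`, `{n - 2, n - 1}`,
`{n - 2}`. -/
lemma val_mem_Ico_of_mem_monochromatic {i : Fin n} (hi : i ∈ monochromatic (cdCopies n)) :
    (i : ℕ) ∈ Ico (4 * (n / 4) + n % 4 / 3) (n - n % 4 / 3) := by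
  have := i.2
  have hprev := val_sub_one_eq_ite i
  have hnext := val_add_one_eq_ite i
  simp only [monochromatic, cdCopies, mem_filter, mem_univ, true_and] at hi
  rw [mem_Ico]
  split_ifs at hprev hnext <;> omega

lemma card_monochromatic_cdCopies_le :
    #(monochromatic (cdCopies n)) ≤ if n % 4 = 2 then 2 else n % 2 :=
  calc #(monochromatic (cdCopies n))
      ≤ #(Ico (4 * (n / 4) + n % 4 / 3) (n - n % 4 / 3)) :=
        card_le_card_of_injOn Fin.val (fun _ => val_mem_Ico_of_mem_monochromatic)
          Fin.val_injective.injOn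
    _ ≤ if n % 4 = 2 then 2 else n % 2 := by
      rw [Nat.card_Ico]
      split_ifs <;> omega

end UpperBound

lemma two_mul_totalDominationNumber :
    2 * totalDominationNumber n = 3 * n + if n % 4 = 2 then 2 else n % 2 := by
  apply le_antisymm
  · calc 2 * totalDominationNumber n
        ≤ 2 * (patternSet (cdCopies n)).ncard :=
          Nat.mul_le_mul_left 2 (Nat.sInf_le ⟨_, totalDominating_patternSet _, rfl⟩)
      _ = 3 * n + #(monochromatic (cdCopies n)) :=
          two_mul_ncard_patternSet not_sub_one_mem_and_add_one_mem_cdCopies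
      _ ≤ _ := Nat.add_le_add_left card_monochromatic_cdCopies_le _
  · obtain ⟨S, hS, hcard⟩ : totalDominationNumber n ∈
        {k | ∃ S : Set (FV n), TotalDominating n S ∧ S.ncard = k} :=
      Nat.sInf_mem ⟨_, patternSet ∅, totalDominating_patternSet ∅, rfl⟩
    have hle := three_mul_le_two_mul_ncard hS
    have hlt := three_mul_lt_two_mul_ncard hS
    rw [← hcard]
    split_ifs <;> omega

end flowerSnark

/-- For every `n ≥ 3`, the total domination number of the flower snark `J_n`
equals `⌈3n/2⌉` if `n ≢ 2 (mod 4)`, and `3n/2 + 1` if `n ≡ 2 (mod 4)`. -/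
theorem flowerSnark_totalDomination (n : ℕ) (hn : 3 ≤ n) :
    (n % 4 ≠ 2 → (totalDominationNumber n : ℤ) = ⌈(3 * (n : ℚ)) / 2⌉) ∧
    (n % 4 = 2 → (totalDominationNumber n : ℚ) = 3 * n / 2 + 1) := by
  have : NeZero n := ⟨by omega⟩
  have hγ : 2 * (totalDominationNumber n : ℚ) =
      3 * n + if n % 4 = 2 then 2 else ((n % 2 : ℕ) : ℚ) := by
    exact_mod_cast flowerSnark.two_mul_totalDominationNumber (n := n)
  constructor
  · intro hn4
    have hpos : (0 : ℚ) ≤ (n % 2 : ℕ) := Nat.cast_nonneg _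
    have hlt : ((n % 2 : ℕ) : ℚ) < 2 := by exact_mod_cast Nat.mod_lt n two_pos
    rw [if_neg hn4] at hγ
    rw [eq_comm, Int.ceil_eq_iff, Int.cast_natCast]
    constructor <;> linarith
  · intro hn4
    rw [if_pos hn4] at hγ
    linarith
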